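/- Let m ≥ 1 and let v_r, v₃ be axially symmetric functions, twice continuously differentiable on a neighborhood of the closure of D_m, satisfying the divergence-free condition ∂_r v_r + v_r/r + ∂_{x₃} v₃ = 0 in D_m, with v_r = 0 on ∂^V D_m and v₃ = 0 on ∂^H D_m. Then ∫_{D_m} ∂_{x₃} v_r · ∂_r v₃ dx = − ∫_{D_m} ( |∂_r v_r|² + v_r²/r² ) dx, and also ∫_{D_m} ∂_{x₃} v_r · ∂_r v₃ dx = − ∫_{D_m} |∂_{x₃} v₃|² dx. -/

import Mathlib

noncomputable section

open Real MeasureTheory Set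

/-- Inner radius of the `j`-th rectangle: `r_j = 2^(-j)`. -/
def rW (j : ℕ) : ℝ := (2 : ℝ) ^ (-(j : ℝ))

/-- Height of the `j`-th rectangle: `h_j = 2^(-β (j-1))`. -/
def hH (β : ℝ) (j : ℕ) : ℝ := (2 : ℝ) ^ (-β * ((j : ℝ) - 1))

/-- The rectangle `S_j` in the `(r, x₃)` cross-section. -/
def Srect (β : ℝ) (j : ℕ) : Set (ℝ × ℝ) :=
  {p : ℝ × ℝ | rW j ≤ p.1 ∧ p.1 < rW (j - 1) ∧ 0 < p.2 ∧ p.2 < hH β j}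

/-- The `(r, x₃)` cross-section of the domain `D_m`. -/
def Ddom (β : ℝ) (m : ℕ) : Set (ℝ × ℝ) := ⋃ j ∈ Finset.Icc 1 m, Srect β j

/-- The horizontal part `∂^H D_m` of the boundary of `D_m` (where `x₃` is locally constant). -/
def bdH (β : ℝ) (m : ℕ) : Set (ℝ × ℝ) :=
  {p : ℝ × ℝ | p.2 = 0 ∧ rW m ≤ p.1 ∧ p.1 ≤ 1} ∪
    ⋃ j ∈ Finset.Icc 1 m,
      {p : ℝ × ℝ | p.2 = hH β j ∧ rW j ≤ p.1 ∧ p.1 ≤ rW (j - 1)}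

/-- The vertical part `∂^V D_m` of the boundary of `D_m` (where `r` is locally constant). -/
def bdV (β : ℝ) (m : ℕ) : Set (ℝ × ℝ) :=
  {p : ℝ × ℝ | p.1 = 1 ∧ 0 ≤ p.2 ∧ p.2 ≤ 1} ∪
    {p : ℝ × ℝ | p.1 = rW m ∧ 0 ≤ p.2 ∧ p.2 ≤ hH β m} ∪
    ⋃ j ∈ Finset.Icc 1 (m - 1),
      {p : ℝ × ℝ | p.1 = rW j ∧ hH β (j + 1) ≤ p.2 ∧ p.2 ≤ hH β j}

/-- The full boundary `∂ D_m` of `D_m`. -/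
def bdD (β : ℝ) (m : ℕ) : Set (ℝ × ℝ) := bdH β m ∪ bdV β m

/-- The corner points of the polygonal cross-section of `D_m`
(i.e. the corner circles of the 3D domain). -/
def cornerSet (β : ℝ) (m : ℕ) : Set (ℝ × ℝ) :=
  ({(rW m, 0), ((1 : ℝ), 0), ((1 : ℝ), (1 : ℝ)), (rW m, hH β m)} : Set (ℝ × ℝ)) ∪
    ⋃ j ∈ Finset.Icc 1 (m - 1),
      ({(rW j, hH β j), (rW j, hH β (j + 1))} : Set (ℝ × ℝ))

/-- Radial partial derivative `∂_r`. -/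
def pdr (F : ℝ × ℝ → ℝ) (p : ℝ × ℝ) : ℝ := deriv (fun r => F (r, p.2)) p.1

/-- Vertical partial derivative `∂_{x₃}`. -/
def pdz (F : ℝ × ℝ → ℝ) (p : ℝ × ℝ) : ℝ := deriv (fun z => F (p.1, z)) p.2

/-- The axially symmetric Laplacian `Δ = ∂_r² + (1/r) ∂_r + ∂_{x₃}²`. -/
def cylLap (F : ℝ × ℝ → ℝ) (p : ℝ × ℝ) : ℝ :=
  pdr (pdr F) p + (1 / p.1) * pdr F p + pdz (pdz F) p

/-- The integral of an axially symmetric function over the 3-dimensional domain `D_m`,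
computed in the cross-section: `∫_{D_m} f dx = 2π ∬ F r dr dx₃`. -/
def cylIntegral (β : ℝ) (m : ℕ) (F : ℝ × ℝ → ℝ) : ℝ :=
  ∫ p in Ddom β m, F p * (2 * π * p.1)

/-- The vertical cross-section segment `D_m ∩ {r = c}` of the cross-section. -/
def vertSeg (β : ℝ) (m : ℕ) (c : ℝ) : Set ℝ := {z : ℝ | (c, z) ∈ Ddom β m}

/-!
With `a = r v_r` and `w = v₃`, the divergence-free condition reads `∂_r a = -r ∂_{x₃} w`, so that
`r (∂_{x₃} v_r ∂_r v₃ + |∂_{x₃} v₃|²)` is the Jacobian `∂_{x₃} a ∂_r w - ∂_r a ∂_{x₃} w`. A Jacobian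
is a divergence, `∂_{x₃} (a ∂_r w) - ∂_r (a ∂_{x₃} w)`, whose flux vanishes because `a = 0` on the
vertical sides and `∂_r w = 0` on the horizontal ones. Squaring the divergence-free condition gives
`r |∂_{x₃} v₃|² = r (|∂_r v_r|² + v_r² / r²) + ∂_r (v_r²)`, where the last term has zero flux too.
-/

section Calculus

variable {E F : Type*} [NormedAddCommGroup E] [NormedSpace ℝ E] [NormedAddCommGroup F]
  [NormedSpace ℝ F] {f : E → F} {n : WithTop ℕ∞}

lemma contDiffAt_of_exists_isOpen {K : Set E}
    (h : ∃ U : Set E, IsOpen U ∧ K ⊆ U ∧ ContDiffOn ℝ n f U) : ∀ x ∈ K, ContDiffAt ℝ n f x := by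
  obtain ⟨U, hU, hKU, hf⟩ := h
  exact fun x hx => hf.contDiffAt (hU.mem_nhds (hKU hx))

lemma continuousOn_of_forall_contDiffAt {K : Set E} (h : ∀ x ∈ K, ContDiffAt ℝ n f x) :
    ContinuousOn f K :=
  fun x hx => (h x hx).continuousAt.continuousWithinAt

lemma eventually_differentiableAt {x : E} (h : ContDiffAt ℝ 1 f x) :
    ∀ᶠ y in nhds x, DifferentiableAt ℝ f y :=
  (h.eventually (by simp)).mono fun _ hy => hy.differentiableAt one_ne_zero

lemma intervalIntegral_eq_zero_of_forall_mem_Ioo {φ : ℝ → F} {a b : ℝ} (hab : a ≤ b)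
    (h : ∀ x ∈ Ioo a b, φ x = 0) : ∫ x in a..b, φ x = 0 :=
  (intervalIntegral.integral_congr_Ioo_of_le hab h).trans intervalIntegral.integral_zero

end Calculus

section PartialDerivatives

variable {F G : ℝ × ℝ → ℝ} {p : ℝ × ℝ}

lemma hasDerivAt_fst_slice (h : DifferentiableAt ℝ F p) :
    HasDerivAt (fun r => F (r, p.2)) (fderiv ℝ F p (1, 0)) p.1 :=
  HasFDerivAt.comp_hasDerivAt (l := F) p.1 h.hasFDerivAt
    ((hasDerivAt_id p.1).prodMk (hasDerivAt_const _ _))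

lemma hasDerivAt_snd_slice (h : DifferentiableAt ℝ F p) :
    HasDerivAt (fun z => F (p.1, z)) (fderiv ℝ F p (0, 1)) p.2 :=
  HasFDerivAt.comp_hasDerivAt (l := F) p.2 h.hasFDerivAt
    ((hasDerivAt_const _ _).prodMk (hasDerivAt_id p.2))

lemma pdr_eq_fderiv (h : DifferentiableAt ℝ F p) : pdr F p = fderiv ℝ F p (1, 0) :=
  (hasDerivAt_fst_slice h).deriv

lemma pdz_eq_fderiv (h : DifferentiableAt ℝ F p) : pdz F p = fderiv ℝ F p (0, 1) :=
  (hasDerivAt_snd_slice h).deriv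

lemma pdr_neg : pdr (fun q => -F q) p = -pdr F p := deriv.fun_neg

lemma pdz_zero : pdz (fun _ => 0) p = 0 := deriv_const p.2 0

lemma pdr_mul (hF : DifferentiableAt ℝ F p) (hG : DifferentiableAt ℝ G p) :
    pdr (fun q => F q * G q) p = pdr F p * G p + F p * pdr G p :=
  deriv_fun_mul (hasDerivAt_fst_slice hF).differentiableAt
    (hasDerivAt_fst_slice hG).differentiableAt

lemma pdz_mul (hF : DifferentiableAt ℝ F p) (hG : DifferentiableAt ℝ G p) :
    pdz (fun q => F q * G q) p = pdz F p * G p + F p * pdz G p :=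
  deriv_fun_mul (hasDerivAt_snd_slice hF).differentiableAt
    (hasDerivAt_snd_slice hG).differentiableAt

lemma pdr_fst : pdr Prod.fst p = 1 := deriv_id p.1

lemma pdz_fst : pdz Prod.fst p = 0 := deriv_const p.2 p.1

lemma pdr_eq_zero_of_forall_mem_Ioo {a b r z : ℝ} (h : ∀ s ∈ Ioo a b, F (s, z) = 0)
    (hr : r ∈ Ioo a b) : pdr F (r, z) = 0 := by
  have heq : (fun s => F (s, z)) =ᶠ[nhds r] fun _ => 0 :=
    Filter.eventually_of_mem (Ioo_mem_nhds hr.1 hr.2) h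
  exact heq.deriv_eq.trans (deriv_const r 0)

lemma pdr_eventuallyEq_fderiv (h : ContDiffAt ℝ 1 F p) :
    pdr F =ᶠ[nhds p] fun q => fderiv ℝ F q (1, 0) :=
  (eventually_differentiableAt h).mono fun _ => pdr_eq_fderiv

lemma pdz_eventuallyEq_fderiv (h : ContDiffAt ℝ 1 F p) :
    pdz F =ᶠ[nhds p] fun q => fderiv ℝ F q (0, 1) :=
  (eventually_differentiableAt h).mono fun _ => pdz_eq_fderiv

lemma contDiffAt_pdr {k n : WithTop ℕ∞} (h : ContDiffAt ℝ n F p) (hkn : k + 1 ≤ n) :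
    ContDiffAt ℝ k (pdr F) p :=
  ((h.fderiv_right hkn).clm_apply contDiffAt_const).congr_of_eventuallyEq
    (pdr_eventuallyEq_fderiv (h.of_le (le_add_self.trans hkn)))

lemma contDiffAt_pdz {k n : WithTop ℕ∞} (h : ContDiffAt ℝ n F p) (hkn : k + 1 ≤ n) :
    ContDiffAt ℝ k (pdz F) p :=
  ((h.fderiv_right hkn).clm_apply contDiffAt_const).congr_of_eventuallyEq
    (pdz_eventuallyEq_fderiv (h.of_le (le_add_self.trans hkn)))

lemma continuousAt_pdr (h : ContDiffAt ℝ 1 F p) : ContinuousAt (pdr F) p :=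
  (contDiffAt_pdr (k := 0) h (zero_add 1).le).continuousAt

lemma continuousAt_pdz (h : ContDiffAt ℝ 1 F p) : ContinuousAt (pdz F) p :=
  (contDiffAt_pdz (k := 0) h (zero_add 1).le).continuousAt

lemma pdz_pdr_eq_pdr_pdz (h : ContDiffAt ℝ 2 F p) : pdz (pdr F) p = pdr (pdz F) p := by
  have h1 : ContDiffAt ℝ 1 F p := h.of_le one_le_two
  have hle : (1 : WithTop ℕ∞) + 1 ≤ 2 := one_add_one_eq_two.le
  have hD : DifferentiableAt ℝ (fderiv ℝ F) p := (h.fderiv_right hle).differentiableAt one_ne_zero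
  have hsymm : fderiv ℝ (fderiv ℝ F) p (0, 1) (1, 0) = fderiv ℝ (fderiv ℝ F) p (1, 0) (0, 1) :=
    h.isSymmSndFDerivAt (by simp) _ _
  rw [pdz_eq_fderiv ((contDiffAt_pdr h hle).differentiableAt one_ne_zero),
    pdr_eq_fderiv ((contDiffAt_pdz h hle).differentiableAt one_ne_zero),
    (pdr_eventuallyEq_fderiv h1).fderiv_eq, (pdz_eventuallyEq_fderiv h1).fderiv_eq,
    fderiv_clm_apply hD (differentiableAt_const _), fderiv_clm_apply hD (differentiableAt_const _)]
  simpa using hsymm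

lemma pdr_neg_mul_pdz_add_pdz_mul_pdr (hF : DifferentiableAt ℝ F p) (hG : ContDiffAt ℝ 2 G p) :
    pdr (fun q => -(F q * pdz G q)) p + pdz (fun q => F q * pdr G q) p =
      pdz F p * pdr G p - pdr F p * pdz G p := by
  have hle : (1 : WithTop ℕ∞) + 1 ≤ 2 := one_add_one_eq_two.le
  rw [pdr_neg, pdr_mul hF ((contDiffAt_pdz hG hle).differentiableAt one_ne_zero),
    pdz_mul hF ((contDiffAt_pdr hG hle).differentiableAt one_ne_zero), pdz_pdr_eq_pdr_pdz hG]
  ring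

lemma continuousOn_pdr {K : Set (ℝ × ℝ)} (h : ∀ p ∈ K, ContDiffAt ℝ 1 F p) :
    ContinuousOn (pdr F) K :=
  fun p hp => (continuousAt_pdr (h p hp)).continuousWithinAt

lemma continuousOn_pdz {K : Set (ℝ × ℝ)} (h : ∀ p ∈ K, ContDiffAt ℝ 1 F p) :
    ContinuousOn (pdz F) K :=
  fun p hp => (continuousAt_pdz (h p hp)).continuousWithinAt

end PartialDerivatives

lemma integral_Icc_pdr_add_pdz {f g : ℝ × ℝ → ℝ} {a b : ℝ × ℝ} (hab : a ≤ b)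
    (hf : ∀ p ∈ Icc a b, ContDiffAt ℝ 1 f p) (hg : ∀ p ∈ Icc a b, ContDiffAt ℝ 1 g p) :
    ∫ p in Icc a b, (pdr f p + pdz g p) =
      (((∫ r in a.1..b.1, g (r, b.2)) - ∫ r in a.1..b.1, g (r, a.2)) +
        ∫ z in a.2..b.2, f (b.1, z)) - ∫ z in a.2..b.2, f (a.1, z) := by
  have hdf (p) (hp : p ∈ Icc a b) : DifferentiableAt ℝ f p := (hf p hp).differentiableAt one_ne_zero
  have hdg (p) (hp : p ∈ Icc a b) : DifferentiableAt ℝ g p := (hg p hp).differentiableAt one_ne_zero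
  have hsub : Ioo a.1 b.1 ×ˢ Ioo a.2 b.2 ⊆ Icc a b := fun p hp =>
    ⟨⟨hp.1.1.le, hp.2.1.le⟩, hp.1.2.le, hp.2.2.le⟩
  have heq : EqOn (fun p => pdr f p + pdz g p)
      (fun p => fderiv ℝ f p (1, 0) + fderiv ℝ g p (0, 1)) (Icc a b) := fun p hp =>
    congrArg₂ (· + ·) (pdr_eq_fderiv (hdf p hp)) (pdz_eq_fderiv (hdg p hp))
  have hint : IntegrableOn (fun p => pdr f p + pdz g p) (Icc a b) :=
    ((continuousOn_pdr hf).add (continuousOn_pdz hg)).integrableOn_compact isCompact_Icc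
  rw [setIntegral_congr_fun measurableSet_Icc heq]
  exact integral_divergence_prod_Icc_of_hasFDerivAt_of_le f g _ _ a b hab
    (continuousOn_of_forall_contDiffAt hf) (continuousOn_of_forall_contDiffAt hg)
    (fun p hp => (hdf p (hsub hp)).hasFDerivAt) (fun p hp => (hdg p (hsub hp)).hasFDerivAt)
    (hint.congr_fun heq measurableSet_Icc)

section Domain

variable {β : ℝ} {m i : ℕ} {F : ℝ × ℝ → ℝ}

lemma rW_pos (j : ℕ) : 0 < rW j := Real.rpow_pos_of_pos two_pos _

lemma hH_pos (β : ℝ) (j : ℕ) : 0 < hH β j := Real.rpow_pos_of_pos two_pos _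

lemma rW_zero : rW 0 = 1 := by simp [rW]

lemma hH_one (β : ℝ) : hH β 1 = 1 := by simp [hH]

lemma rW_strictAnti : StrictAnti rW := fun _ _ h =>
  Real.rpow_lt_rpow_of_exponent_lt one_lt_two (neg_lt_neg (Nat.cast_lt.2 h))

lemma hH_antitone (hβ : 0 ≤ β) : Antitone (hH β) := fun _ _ h =>
  Real.rpow_le_rpow_of_exponent_le one_le_two <|
    mul_le_mul_of_nonpos_left (sub_le_sub_right (Nat.cast_le.2 h) 1) (neg_nonpos.2 hβ)

lemma Srect_succ_eq_prod (β : ℝ) (i : ℕ) :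
    Srect β (i + 1) = Ico (rW (i + 1)) (rW i) ×ˢ Ioo 0 (hH β (i + 1)) := by
  ext p
  simp only [Srect, Nat.add_sub_cancel, mem_ofPred_eq, mem_prod, mem_Ico, mem_Ioo, and_assoc]

lemma measurableSet_Srect_succ (β : ℝ) (i : ℕ) : MeasurableSet (Srect β (i + 1)) := by
  rw [Srect_succ_eq_prod]
  exact measurableSet_Ico.prod measurableSet_Ioo

lemma pairwise_disjoint_Srect_succ (β : ℝ) :
    Pairwise (Function.onFun Disjoint fun i => Srect β (i + 1)) := by
  simp only [Srect_succ_eq_prod]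
  exact rW_strictAnti.antitone.pairwise_disjoint_on_Ico_succ.mono fun _ _ h =>
    h.set_prod_left _ _

lemma Srect_succ_ae_eq_Icc (β : ℝ) (i : ℕ) :
    Srect β (i + 1) =ᵐ[volume] Icc (rW (i + 1), 0) (rW i, hH β (i + 1)) := by
  rw [Srect_succ_eq_prod, ← Icc_prod_Icc]
  exact Measure.set_prod_ae_eq Ico_ae_eq_Icc Ioo_ae_eq_Icc

lemma Ddom_eq_biUnion_range (β : ℝ) (m : ℕ) :
    Ddom β m = ⋃ i ∈ Finset.range m, Srect β (i + 1) := by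
  rw [Ddom, ← Finset.Ico_add_one_right_eq_Icc, ← zero_add 1, ← Finset.image_add_right_Ico,
    Finset.set_biUnion_finset_image, Finset.range_eq_Ico]

lemma measurableSet_Ddom (β : ℝ) (m : ℕ) : MeasurableSet (Ddom β m) := by
  rw [Ddom_eq_biUnion_range]
  exact Finset.measurableSet_biUnion _ fun i _ => measurableSet_Srect_succ β i

lemma Icc_subset_closure_Ddom (hi : i < m) :
    Icc (rW (i + 1), 0) (rW i, hH β (i + 1)) ⊆ closure (Ddom β m) := by
  have hcl : closure (Srect β (i + 1)) = Icc (rW (i + 1), 0) (rW i, hH β (i + 1)) := by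
    rw [Srect_succ_eq_prod, closure_prod_eq,
      closure_Ico (rW_strictAnti i.lt_succ_self).ne, closure_Ioo (hH_pos β _).ne, Icc_prod_Icc]
  rw [← hcl]
  exact closure_mono (subset_biUnion_of_mem (u := Srect β)
    (Finset.mem_Icc.2 ⟨Nat.le_add_left 1 i, hi⟩))

lemma fst_pos_of_mem_closure_Ddom {p : ℝ × ℝ} (hp : p ∈ closure (Ddom β m)) : 0 < p.1 := by
  have hsub : Ddom β m ⊆ {q | rW m ≤ q.1} := by
    refine iUnion₂_subset fun j hj q hq => ?_
    exact (rW_strictAnti.antitone (Finset.mem_Icc.1 hj).2).trans hq.1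
  exact (rW_pos m).trans_le (closure_minimal hsub (isClosed_le continuous_const continuous_fst) hp)

lemma integrableOn_Srect_of_continuousOn (hF : ContinuousOn F (closure (Ddom β m))) (hi : i < m) :
    IntegrableOn F (Srect β (i + 1)) :=
  ((hF.mono (Icc_subset_closure_Ddom hi)).integrableOn_compact isCompact_Icc).congr_set_ae
    (Srect_succ_ae_eq_Icc β i)

lemma integrableOn_Ddom_of_continuousOn (hF : ContinuousOn F (closure (Ddom β m))) :
    IntegrableOn F (Ddom β m) := by
  rw [Ddom_eq_biUnion_range, integrableOn_finset_iUnion]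
  exact fun i hi => integrableOn_Srect_of_continuousOn hF (Finset.mem_range.1 hi)

lemma integral_Ddom_eq_sum (hF : ContinuousOn F (closure (Ddom β m))) :
    ∫ p in Ddom β m, F p =
      ∑ i ∈ Finset.range m, ∫ p in Icc (rW (i + 1), 0) (rW i, hH β (i + 1)), F p := by
  rw [Ddom_eq_biUnion_range, integral_biUnion_finset _ (fun i _ => measurableSet_Srect_succ β i)
    (fun i _ j _ hij => pairwise_disjoint_Srect_succ β hij)
    (fun i hi => integrableOn_Srect_of_continuousOn hF (Finset.mem_range.1 hi))]
  exact Finset.sum_congr rfl fun i _ => setIntegral_congr_set (Srect_succ_ae_eq_Icc β i)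

lemma bottom_mem_bdH {r : ℝ} (hi : i < m) (hr : r ∈ Icc (rW (i + 1)) (rW i)) :
    (r, 0) ∈ bdH β m :=
  Or.inl ⟨rfl, (rW_strictAnti.antitone hi).trans hr.1,
    rW_zero ▸ hr.2.trans (rW_strictAnti.antitone i.zero_le)⟩

lemma top_mem_bdH {r : ℝ} (hi : i < m) (hr : r ∈ Icc (rW (i + 1)) (rW i)) :
    (r, hH β (i + 1)) ∈ bdH β m :=
  Or.inr (mem_biUnion (x := i + 1) (Finset.mem_Icc.2 ⟨Nat.le_add_left 1 i, hi⟩)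
    ⟨rfl, hr.1, hr.2⟩)

lemma outer_mem_bdV {z : ℝ} (hz : z ∈ Icc 0 1) : (rW 0, z) ∈ bdV β m :=
  Or.inl (Or.inl ⟨rW_zero, hz.1, hz.2⟩)

lemma inner_mem_bdV {z : ℝ} (hz : z ∈ Icc 0 (hH β m)) : (rW m, z) ∈ bdV β m :=
  Or.inl (Or.inr ⟨rfl, hz.1, hz.2⟩)

lemma step_mem_bdV {z : ℝ} (hi : i < m) (hz : z ∈ Icc (hH β (i + 2)) (hH β (i + 1))) :
    (rW (i + 1), z) ∈ bdV β m := by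
  obtain rfl | hlt := eq_or_lt_of_le (Nat.succ_le_of_lt hi)
  · exact inner_mem_bdV ⟨(hH_pos β _).le.trans hz.1, hz.2⟩
  · exact Or.inr (mem_biUnion (x := i + 1)
      (Finset.mem_Icc.2 ⟨Nat.le_add_left 1 i, Nat.le_sub_one_of_lt hlt⟩) ⟨rfl, hz.1, hz.2⟩)

lemma flux_succ_eq (hβ : 0 ≤ β) (hi : i < m) (hF : ContinuousOn F (closure (Ddom β m)))
    (hFV : ∀ p ∈ bdV β m, F p = 0) :
    ∫ z in 0..hH β (i + 1), F (rW (i + 1), z) = ∫ z in 0..hH β (i + 2), F (rW (i + 1), z) := by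
  have hle : hH β (i + 2) ≤ hH β (i + 1) := hH_antitone hβ (i + 1).le_succ
  have hpos := (hH_pos β (i + 2)).le
  have hcont : ContinuousOn (fun z => F (rW (i + 1), z)) (Icc 0 (hH β (i + 1))) :=
    hF.comp (by fun_prop) fun z hz => Icc_subset_closure_Ddom hi
      ⟨⟨le_rfl, hz.1⟩, (rW_strictAnti i.lt_succ_self).le, hz.2⟩
  rw [← intervalIntegral.integral_add_adjacent_intervals
      (ContinuousOn.intervalIntegrable_of_Icc hpos (hcont.mono (Icc_subset_Icc_right hle)))
      (ContinuousOn.intervalIntegrable_of_Icc hle (hcont.mono (Icc_subset_Icc_left hpos))),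
    intervalIntegral_eq_zero_of_forall_mem_Ioo hle
      fun z hz => hFV _ (step_mem_bdV hi (Ioo_subset_Icc_self hz)), add_zero]

-- The corners are left out of the horizontal sides: in the application `g` contains `∂_r v₃`, which
-- is seen to vanish only where `v₃ = 0` on both sides of the point.
lemma integral_Ddom_pdr_add_pdz_eq_zero {f g : ℝ × ℝ → ℝ} (hβ : 0 ≤ β)
    (hf : ∀ p ∈ closure (Ddom β m), ContDiffAt ℝ 1 f p)
    (hg : ∀ p ∈ closure (Ddom β m), ContDiffAt ℝ 1 g p)
    (hfV : ∀ p ∈ bdV β m, f p = 0)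
    (hgbot : ∀ i < m, ∀ r ∈ Ioo (rW (i + 1)) (rW i), g (r, 0) = 0)
    (hgtop : ∀ i < m, ∀ r ∈ Ioo (rW (i + 1)) (rW i), g (r, hH β (i + 1)) = 0) :
    ∫ p in Ddom β m, (pdr f p + pdz g p) = 0 := by
  let flux (i : ℕ) : ℝ := ∫ z in 0..hH β (i + 1), f (rW i, z)
  have hrect (i) (hi : i ∈ Finset.range m) :
      ∫ p in Icc (rW (i + 1), 0) (rW i, hH β (i + 1)), (pdr f p + pdz g p) =
        flux i - flux (i + 1) := by
    rw [Finset.mem_range] at hi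
    have hle : rW (i + 1) ≤ rW i := (rW_strictAnti i.lt_succ_self).le
    have hsub := Icc_subset_closure_Ddom (β := β) hi
    rw [integral_Icc_pdr_add_pdz ⟨hle, (hH_pos β _).le⟩ (fun p hp => hf p (hsub hp))
        (fun p hp => hg p (hsub hp)),
      intervalIntegral_eq_zero_of_forall_mem_Ioo hle (hgtop i hi),
      intervalIntegral_eq_zero_of_forall_mem_Ioo hle (hgbot i hi),
      flux_succ_eq hβ hi (continuousOn_of_forall_contDiffAt hf) hfV, sub_zero, zero_add]
  have houter : flux 0 = 0 :=
    intervalIntegral_eq_zero_of_forall_mem_Ioo (hH_pos β 1).le fun z hz =>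
      hfV _ (outer_mem_bdV ⟨hz.1.le, hz.2.le.trans_eq (hH_one β)⟩)
  have hinner : flux m = 0 :=
    intervalIntegral_eq_zero_of_forall_mem_Ioo (hH_pos β _).le fun z hz =>
      hfV _ (inner_mem_bdV ⟨hz.1.le, hz.2.le.trans (hH_antitone hβ m.le_succ)⟩)
  rw [integral_Ddom_eq_sum (F := fun p => pdr f p + pdz g p)
      ((continuousOn_pdr hf).add (continuousOn_pdz hg)),
    Finset.sum_congr rfl hrect, Finset.sum_range_sub', houter, hinner, sub_zero]

lemma integral_Ddom_jacobian_eq_zero {a w : ℝ × ℝ → ℝ} (hβ : 0 ≤ β)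
    (ha : ∀ p ∈ closure (Ddom β m), ContDiffAt ℝ 1 a p)
    (hw : ∀ p ∈ closure (Ddom β m), ContDiffAt ℝ 2 w p)
    (haV : ∀ p ∈ bdV β m, a p = 0) (hwH : ∀ p ∈ bdH β m, w p = 0) :
    ∫ p in Ddom β m, (pdz a p * pdr w p - pdr a p * pdz w p) = 0 := by
  have hle : (1 : WithTop ℕ∞) + 1 ≤ 2 := one_add_one_eq_two.le
  have hbot (i) (hi : i < m) (r) (hr : r ∈ Ioo (rW (i + 1)) (rW i)) : pdr w (r, 0) = 0 :=
    pdr_eq_zero_of_forall_mem_Ioo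
      (fun s hs => hwH _ (bottom_mem_bdH hi (Ioo_subset_Icc_self hs))) hr
  have htop (i) (hi : i < m) (r) (hr : r ∈ Ioo (rW (i + 1)) (rW i)) :
      pdr w (r, hH β (i + 1)) = 0 :=
    pdr_eq_zero_of_forall_mem_Ioo
      (fun s hs => hwH _ (top_mem_bdH hi (Ioo_subset_Icc_self hs))) hr
  rw [← integral_Ddom_pdr_add_pdz_eq_zero hβ
    (f := fun p => -(a p * pdz w p)) (g := fun p => a p * pdr w p)
    (fun p hp => ((ha p hp).mul (contDiffAt_pdz (hw p hp) hle)).neg)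
    (fun p hp => (ha p hp).mul (contDiffAt_pdr (hw p hp) hle))
    (fun p hp => by rw [haV p hp, zero_mul, neg_zero])
    (fun i hi r hr => by rw [hbot i hi r hr, mul_zero])
    (fun i hi r hr => by rw [htop i hi r hr, mul_zero])]
  exact setIntegral_congr_fun (measurableSet_Ddom β m) fun p hp =>
    (pdr_neg_mul_pdz_add_pdz_mul_pdr ((ha p (subset_closure hp)).differentiableAt one_ne_zero)
      (hw p (subset_closure hp))).symm

lemma cylIntegral_eq_of_integral_eq_zero {G H : ℝ × ℝ → ℝ}
    (hF : ContinuousOn F (closure (Ddom β m))) (hG : ContinuousOn G (closure (Ddom β m)))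
    (h : ∀ p ∈ Ddom β m, p.1 * (F p - G p) = H p) (hH_int : ∫ p in Ddom β m, H p = 0) :
    cylIntegral β m F = cylIntegral β m G := by
  have hint {E : ℝ × ℝ → ℝ} (hE : ContinuousOn E (closure (Ddom β m))) :
      IntegrableOn (fun p => E p * (2 * π * p.1)) (Ddom β m) :=
    integrableOn_Ddom_of_continuousOn (hE.mul (by fun_prop))
  rw [← sub_eq_zero, cylIntegral, cylIntegral, ← integral_sub (hint hF) (hint hG),
    ← mul_zero (2 * π), ← hH_int, ← integral_const_mul]
  refine setIntegral_congr_fun (measurableSet_Ddom β m) fun p hp => ?_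
  simp only [← h p hp]
  ring

end Domain

section DivergenceFree

variable {β : ℝ} {m : ℕ} {vr v3 : ℝ × ℝ → ℝ}

lemma cylIntegral_pdz_mul_pdr_eq_neg_sq (hβ : 0 ≤ β)
    (hvr : ∀ p ∈ closure (Ddom β m), ContDiffAt ℝ 1 vr p)
    (hv3 : ∀ p ∈ closure (Ddom β m), ContDiffAt ℝ 2 v3 p)
    (hdiv : ∀ p ∈ Ddom β m, pdr vr p + vr p / p.1 + pdz v3 p = 0)
    (hvrV : ∀ p ∈ bdV β m, vr p = 0) (hv3H : ∀ p ∈ bdH β m, v3 p = 0) :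
    (cylIntegral β m fun p => pdz vr p * pdr v3 p) =
      -cylIntegral β m fun p => (pdz v3 p) ^ 2 := by
  have hv3' (p) (hp : p ∈ closure (Ddom β m)) := (hv3 p hp).of_le one_le_two
  have hneg : -(cylIntegral β m fun p => (pdz v3 p) ^ 2) =
      cylIntegral β m fun p => -(pdz v3 p) ^ 2 := by
    simp only [cylIntegral, neg_mul, integral_neg]
  rw [hneg]
  refine cylIntegral_eq_of_integral_eq_zero ((continuousOn_pdz hvr).mul (continuousOn_pdr hv3'))
    ((continuousOn_pdz hv3').pow 2).neg (fun p hp => ?_)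
    (integral_Ddom_jacobian_eq_zero (a := fun p => p.1 * vr p) hβ
      (fun p hp => contDiffAt_fst.mul (hvr p hp)) hv3
      (fun p hp => by rw [hvrV p hp, mul_zero]) hv3H)
  have hp0 : p.1 ≠ 0 := (fst_pos_of_mem_closure_Ddom (subset_closure hp)).ne'
  have hd : DifferentiableAt ℝ vr p := (hvr p (subset_closure hp)).differentiableAt one_ne_zero
  have hdiv' : vr p + p.1 * pdr vr p = -(p.1 * pdz v3 p) := by
    have := hdiv p hp
    field_simp at this
    linarith
  rw [pdz_mul differentiableAt_fst hd, pdr_mul differentiableAt_fst hd, pdz_fst, pdr_fst, one_mul,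
    hdiv']
  ring

lemma cylIntegral_sq_pdz_eq (hβ : 0 ≤ β)
    (hvr : ∀ p ∈ closure (Ddom β m), ContDiffAt ℝ 1 vr p)
    (hv3 : ∀ p ∈ closure (Ddom β m), ContDiffAt ℝ 1 v3 p)
    (hdiv : ∀ p ∈ Ddom β m, pdr vr p + vr p / p.1 + pdz v3 p = 0)
    (hvrV : ∀ p ∈ bdV β m, vr p = 0) :
    (cylIntegral β m fun p => (pdz v3 p) ^ 2) =
      cylIntegral β m fun p => (pdr vr p) ^ 2 + (vr p) ^ 2 / p.1 ^ 2 := by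
  refine cylIntegral_eq_of_integral_eq_zero ((continuousOn_pdz hv3).pow 2)
    (((continuousOn_pdr hvr).pow 2).add
      (((continuousOn_of_forall_contDiffAt hvr).pow 2).div (by fun_prop)
        fun p hp => pow_ne_zero 2 (fst_pos_of_mem_closure_Ddom hp).ne')) (fun p hp => ?_)
    (integral_Ddom_pdr_add_pdz_eq_zero (f := fun p => vr p * vr p) (g := fun _ => 0) hβ
      (fun p hp => (hvr p hp).mul (hvr p hp)) (fun _ _ => contDiffAt_const)
      (fun p hp => by rw [hvrV p hp, mul_zero]) (fun _ _ _ _ => rfl) (fun _ _ _ _ => rfl))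
  have hp0 : p.1 ≠ 0 := (fst_pos_of_mem_closure_Ddom (subset_closure hp)).ne'
  have hd : DifferentiableAt ℝ vr p := (hvr p (subset_closure hp)).differentiableAt one_ne_zero
  rw [pdr_mul hd hd, pdz_zero, eq_neg_of_add_eq_zero_right (hdiv p hp)]
  field_simp
  ring

theorem div_free_ibp_identities_general (hβ : 0 ≤ β)
    (hvr : ∀ p ∈ closure (Ddom β m), ContDiffAt ℝ 1 vr p)
    (hv3 : ∀ p ∈ closure (Ddom β m), ContDiffAt ℝ 2 v3 p)
    (hdiv : ∀ p ∈ Ddom β m, pdr vr p + vr p / p.1 + pdz v3 p = 0)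
    (hvrV : ∀ p ∈ bdV β m, vr p = 0) (hv3H : ∀ p ∈ bdH β m, v3 p = 0) :
    (cylIntegral β m fun p => pdz vr p * pdr v3 p)
        = -cylIntegral β m (fun p => (pdr vr p) ^ 2 + (vr p) ^ 2 / p.1 ^ 2) ∧
      (cylIntegral β m fun p => pdz vr p * pdr v3 p)
        = -cylIntegral β m (fun p => (pdz v3 p) ^ 2) := by
  have h := cylIntegral_pdz_mul_pdr_eq_neg_sq hβ hvr hv3 hdiv hvrV hv3H
  rw [← cylIntegral_sq_pdz_eq hβ hvr (fun p hp => (hv3 p hp).of_le one_le_two) hdiv hvrV]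
  exact ⟨h, h⟩

end DivergenceFree

/-- Integration by parts identities for a divergence-free
axially symmetric field `(v_r, v₃)` with the stated boundary conditions. -/
theorem div_free_ibp_identities (β : ℝ) (hβ : 1 < β) (hβ' : β ≤ 1.1)
    (m : ℕ) (hm : 1 ≤ m) (vr v3 : ℝ × ℝ → ℝ)
    (hvr : ∃ U : Set (ℝ × ℝ), IsOpen U ∧ closure (Ddom β m) ⊆ U ∧ ContDiffOn ℝ 2 vr U)
    (hv3 : ∃ U : Set (ℝ × ℝ), IsOpen U ∧ closure (Ddom β m) ⊆ U ∧ ContDiffOn ℝ 2 v3 U)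
    (hdiv : ∀ p ∈ Ddom β m, pdr vr p + vr p / p.1 + pdz v3 p = 0)
    (hvrV : ∀ p ∈ bdV β m, vr p = 0)
    (hv3H : ∀ p ∈ bdH β m, v3 p = 0) :
    (cylIntegral β m fun p => pdz vr p * pdr v3 p)
        = -cylIntegral β m (fun p => (pdr vr p) ^ 2 + (vr p) ^ 2 / p.1 ^ 2) ∧
      (cylIntegral β m fun p => pdz vr p * pdr v3 p)
        = -cylIntegral β m (fun p => (pdz v3 p) ^ 2) :=
  div_free_ibp_identities_general (zero_le_one.trans hβ.le)
    (fun p hp => (contDiffAt_of_exists_isOpen hvr p hp).of_le one_le_two)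
    (contDiffAt_of_exists_isOpen hv3) hdiv hvrV hv3H
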